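/- Every set of exactly 4 or exactly 5 distinct points of ℙ³(ℂ) satisfying the Cayley–Bacharach property for quadrics is contained in a line (the projectivization of a 2-dimensional linear subspace of ℂ⁴). -/

import Mathlib

open MvPolynomial
open scoped Classical

/-- A finite set `P` of points of `ℙ³(ℂ)` satisfies the Cayley–Bacharach property for quadrics
if it is nonempty and, for every `p ∈ P`, every quadric (homogeneous polynomial of degree `2`
in `ℂ[X₀,X₁,X₂,X₃]`) vanishing at all points of `P \ {p}` also vanishes at `p`. -/
def CayleyBacharach (P : Finset (Projectivization ℂ (Fin 4 → ℂ))) : Prop :=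
  P.Nonempty ∧
    ∀ p ∈ P, ∀ Q : MvPolynomial (Fin 4) ℂ, Q.IsHomogeneous 2 →
      (∀ q ∈ P.erase p, eval (Projectivization.rep q) Q = 0) →
      eval (Projectivization.rep p) Q = 0

/-! Let `P` satisfy the Cayley–Bacharach property in degree `k + 1`. Multiplying forms of degree `k`
by a linear form `l` shows that the points of `P` off the hyperplane `l = 0`, if there are any,
satisfy it in degree `k`. By induction, a set with the property in degree `k` has at least `k + 2`
points.

Suppose now that `#P ≤ 2 * k + 3` and that `P` is not contained in the line through two of its
points. A hyperplane containing these two points but not all of `P` leaves at most `2 * k + 1`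
points, which lie on a line `L` by induction, and there are at least `k + 2` of them. If some point
of `P` were not on `L`, a hyperplane containing `L` but not that point would leave `k + 2` further
points of `P`, so that `P` would have at least `2 * k + 4` points. -/

open scoped LinearAlgebra.Projectivization

section Projectivization

variable {K V : Type*} [Field K] [AddCommGroup V] [Module K V]

theorem rep_notMem_span_singleton_of_ne {p q : ℙ K V} (hpq : p ≠ q) :
    q.rep ∉ Submodule.span K {p.rep} := by
  have hind := (LinearIndependent.pair_iff' p.rep_nonzero).1
    (Projectivization.linearIndependent_pair_iff_ne.2 hpq)
  rw [Submodule.mem_span_singleton]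
  exact fun ⟨c, hc⟩ => hind c hc

theorem finrank_span_rep_pair_of_ne {p q : ℙ K V} (hpq : p ≠ q) :
    Module.finrank K (Submodule.span K {p.rep, q.rep}) = 2 := by
  rw [← Matrix.range_cons_cons_empty p.rep q.rep ![]]
  exact finrank_span_eq_card (Projectivization.linearIndependent_pair_iff_ne.2 hpq)

end Projectivization

section CayleyBacharach

variable {K σ : Type*} [Field K]

theorem exists_isHomogeneous_one_eval_ne_zero [Finite σ] {W : Submodule K (σ → K)} {v : σ → K}
    (hv : v ∉ W) :
    ∃ l : MvPolynomial σ K, l.IsHomogeneous 1 ∧ eval v l ≠ 0 ∧ ∀ w ∈ W, eval w l = 0 := by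
  have := Fintype.ofFinite σ
  obtain ⟨f, hfv, hWf⟩ := W.exists_le_ker_of_notMem hv
  let M : Matrix Unit σ K := LinearMap.toMatrix' (LinearMap.pi fun _ => f)
  have eval_eq (w : σ → K) : eval w (M.toMvPolynomial ()) = f w := by
    rw [Matrix.toMvPolynomial_eval_eq_apply, LinearMap.toMatrix'_mulVec, LinearMap.pi_apply]
  refine ⟨M.toMvPolynomial (), M.toMvPolynomial_isHomogeneous (), ?_, fun w hw => ?_⟩
  · rwa [eval_eq]
  · rw [eval_eq]
    exact hWf hw

/-- The Cayley–Bacharach property for hypersurfaces of degree `k`, for a finite set of points of the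
projective space with homogeneous coordinates indexed by `σ`; it extends `CayleyBacharach` to all
degrees, so that one can induct on the degree. Vanishing at a point is tested on the representative
`Projectivization.rep`, a choice that is immaterial for homogeneous polynomials. -/
def IsCayleyBacharach (k : ℕ) (P : Finset (ℙ K (σ → K))) : Prop :=
  P.Nonempty ∧
    ∀ p ∈ P, ∀ Q : MvPolynomial σ K, Q.IsHomogeneous k →
      (∀ q ∈ P.erase p, eval q.rep Q = 0) → eval p.rep Q = 0

namespace IsCayleyBacharach

variable {k : ℕ} {P : Finset (ℙ K (σ → K))}

theorem filter_eval_ne_zero {d : ℕ} (h : IsCayleyBacharach (k + d) P) {F : MvPolynomial σ K}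
    (hF : F.IsHomogeneous d) (hne : ∃ p ∈ P, eval p.rep F ≠ 0) :
    IsCayleyBacharach k {p ∈ P | eval p.rep F ≠ 0} := by
  refine ⟨Finset.filter_nonempty_iff.2 hne, fun p hp Q hQ hQp => ?_⟩
  obtain ⟨hpP, hpF⟩ := Finset.mem_filter.1 hp
  have hQF : eval p.rep (Q * F) = 0 := by
    refine h.2 p hpP (Q * F) (hQ.mul hF) fun q hq => ?_
    obtain ⟨hqp, hqP⟩ := Finset.mem_erase.1 hq
    rw [map_mul, mul_eq_zero, or_iff_not_imp_right]
    exact fun hqF => hQp q (Finset.mem_erase.2 ⟨hqp, Finset.mem_filter.2 ⟨hqP, hqF⟩⟩)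
  rw [map_mul] at hQF
  exact (mul_eq_zero.1 hQF).resolve_right hpF

theorem one_lt_card (h : IsCayleyBacharach k P) : 1 < P.card := by
  obtain ⟨⟨p, hp⟩, hP⟩ := h
  by_contra! hcard
  have herase (q) (hq : q ∈ P.erase p) : False :=
    Finset.ne_of_mem_erase hq (Finset.card_le_one.1 hcard q (Finset.mem_of_mem_erase hq) p hp)
  obtain ⟨i, hi⟩ := Function.ne_iff.1 p.rep_nonzero
  have hpow := hP p hp (X i ^ k) (isHomogeneous_X_pow i k) fun q hq => (herase q hq).elim
  rw [map_pow, eval_X] at hpow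
  exact pow_ne_zero k hi hpow

theorem exists_subset_forall_rep_notMem [Finite σ] (h : IsCayleyBacharach (k + 1) P)
    {W : Submodule K (σ → K)} (hW : ∃ p ∈ P, p.rep ∉ W) :
    ∃ R ⊆ P, IsCayleyBacharach k R ∧ ∀ p ∈ R, p.rep ∉ W := by
  obtain ⟨p, hp, hpW⟩ := hW
  obtain ⟨l, hl, hlp, hlW⟩ := exists_isHomogeneous_one_eval_ne_zero hpW
  exact ⟨_, Finset.filter_subset _ _, h.filter_eval_ne_zero hl ⟨p, hp, hlp⟩,
    fun q hq hqW => (Finset.mem_filter.1 hq).2 (hlW _ hqW)⟩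

theorem add_two_le_card [Finite σ] (h : IsCayleyBacharach k P) : k + 2 ≤ P.card := by
  induction k generalizing P with
  | zero => exact h.one_lt_card
  | succ k ih =>
    obtain ⟨p, hp, q, hq, hpq⟩ := Finset.one_lt_card.1 h.one_lt_card
    obtain ⟨R, hRP, hR, hRp⟩ :=
      h.exists_subset_forall_rep_notMem ⟨q, hq, rep_notMem_span_singleton_of_ne hpq⟩
    have hpR : p ∉ R := fun hp => hRp p hp (Submodule.mem_span_singleton_self _)
    exact Nat.succ_le_of_lt <| (ih hR).trans_lt <|
      Finset.card_lt_card <| (Finset.ssubset_iff_of_subset hRP).2 ⟨p, hp, hpR⟩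

theorem forall_rep_mem_of_subset [Finite σ] (h : IsCayleyBacharach (k + 1) P)
    (hcard : P.card ≤ 2 * k + 3) {R : Finset (ℙ K (σ → K))} (hRP : R ⊆ P)
    (hR : IsCayleyBacharach k R) {W : Submodule K (σ → K)} (hRW : ∀ p ∈ R, p.rep ∈ W) :
    ∀ p ∈ P, p.rep ∈ W := by
  by_contra! hW
  obtain ⟨S, hSP, hS, hSW⟩ := h.exists_subset_forall_rep_notMem hW
  have hRS : Disjoint R S := Finset.disjoint_left.2 fun p hpR hpS => hSW p hpS (hRW p hpR)
  have hRS_card : R.card + S.card ≤ P.card := by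
    rw [← Finset.card_union_of_disjoint hRS]
    exact Finset.card_le_card (Finset.union_subset hRP hSP)
  have := hR.add_two_le_card
  have := hS.add_two_le_card
  lia

end IsCayleyBacharach

theorem stmt_16_general [Finite σ] {k : ℕ} {P : Finset (ℙ K (σ → K))}
    (h : IsCayleyBacharach k P) (hcard : P.card ≤ 2 * k + 1) :
    ∃ W : Submodule K (σ → K), Module.finrank K W = 2 ∧ ∀ p ∈ P, p.rep ∈ W := by
  induction k generalizing P with
  | zero => exact absurd hcard (Nat.not_le.2 h.one_lt_card)
  | succ k ih =>
    obtain ⟨a, ha, b, hb, hab⟩ := Finset.one_lt_card.1 h.one_lt_card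
    by_cases hline : ∀ p ∈ P, p.rep ∈ Submodule.span K {a.rep, b.rep}
    · exact ⟨_, finrank_span_rep_pair_of_ne hab, hline⟩
    push Not at hline
    obtain ⟨R, hRP, hR, hRline⟩ := h.exists_subset_forall_rep_notMem hline
    have haR : a ∉ R := fun ha => hRline a ha (Submodule.subset_span (by simp))
    have hbR : b ∉ R := fun hb => hRline b hb (Submodule.subset_span (by simp))
    have hR_card : R.card + 2 ≤ P.card := by
      rw [← Finset.card_pair hab, ← Finset.card_union_of_disjoint (by simp [haR, hbR])]
      exact Finset.card_le_card <| Finset.union_subset hRP <|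
        Finset.insert_subset ha (Finset.singleton_subset_iff.2 hb)
    obtain ⟨L, hL, hRL⟩ := ih hR (by lia)
    exact ⟨L, hL, h.forall_rep_mem_of_subset hcard hRP hR hRL⟩

end CayleyBacharach

/-- Every set of exactly `4` or exactly `5` distinct points of `ℙ³(ℂ)`
satisfying the Cayley–Bacharach property for quadrics is contained in a line, i.e. the
projectivization of a `2`-dimensional linear subspace of `ℂ⁴`. -/
theorem stmt_16 (P : Finset (Projectivization ℂ (Fin 4 → ℂ))) (h : CayleyBacharach P)
    (hcard : P.card = 4 ∨ P.card = 5) :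
    ∃ W : Submodule ℂ (Fin 4 → ℂ), Module.finrank ℂ W = 2 ∧
      ∀ p ∈ P, Projectivization.rep p ∈ W :=
  stmt_16_general (k := 2) h (by lia)
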